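/- Fix s ∈ ℕ. If ν is a finite nonnegative Borel measure on X×Y whose moments ν_d := ∫ x^{d_x} y^{d_y} dν satisfy ν_d = μ_d for all d ∈ D, then Σ_{d ∈ ℕ^n×ℕ, |d| ≤ s} μ_{2d} ≤ Σ_{d ∈ ℕ^n×ℕ, |d| ≤ s} ν_{2d}. -/

import Mathlib

open MeasureTheory Set

noncomputable section

/-- The finite set of multi-indices `d ∈ ℕ^n × ℕ` with `|d| ≤ s`. -/
def idx (n s : ℕ) : Finset ((Fin n → ℕ) × ℕ) :=
  Finset.filter (fun d => (∑ i, d.1 i) + d.2 ≤ s)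
    ((Fintype.piFinset fun _ : Fin n => Finset.range (s + 1)) ×ˢ Finset.range (s + 1))

theorem mom_ext {n : ℕ} {X : Set (Fin n → ℝ)} (hXc : IsCompact X)
    (P Q : Measure (Fin n → ℝ)) [IsFiniteMeasure P] [IsFiniteMeasure Q]
    (hP : P Xᶜ = 0) (hQ : Q Xᶜ = 0)
    (h : ∀ a : Fin n → ℕ, ∫ x, ∏ i, x i ^ a i ∂P = ∫ x, ∏ i, x i ^ a i ∂Q) : P = Q := by
  have hXm : MeasurableSet X := hXc.isClosed.measurableSet
  have : CompactSpace X := isCompact_iff_compactSpace.mp hXc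
  have : PolishSpace X := hXc.isClosed.polishSpace
  have hPr : P.restrict X = P := Measure.restrict_eq_self_of_ae_mem (by
    rw [ae_iff]; exact hP)
  have hQr : Q.restrict X = Q := Measure.restrict_eq_self_of_ae_mem (by
    rw [ae_iff]; exact hQ)
  let P' : Measure X := P.comap Subtype.val
  let Q' : Measure X := Q.comap Subtype.val
  have hP' : P'.map Subtype.val = P := by
    rw [map_comap_subtype_coe hXm, hPr]
  have hQ' : Q'.map Subtype.val = Q := by
    rw [map_comap_subtype_coe hXm, hQr]
  have : IsFiniteMeasure P' := ⟨by
    have := congrArg (fun m => m univ) hP'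
    simp only [Measure.map_apply measurable_subtype_coe MeasurableSet.univ, preimage_univ] at this
    rw [this]; exact measure_lt_top _ _⟩
  have : IsFiniteMeasure Q' := ⟨by
    have := congrArg (fun m => m univ) hQ'
    simp only [Measure.map_apply measurable_subtype_coe MeasurableSet.univ, preimage_univ] at this
    rw [this]; exact measure_lt_top _ _⟩
  let c : Fin n → BoundedContinuousFunction X ℝ := fun i =>
    BoundedContinuousFunction.mkOfCompact ⟨fun x => x.1 i, (continuous_apply i).comp continuous_subtype_val⟩
  let A : StarSubalgebra ℝ (BoundedContinuousFunction X ℝ) :=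
    { (MvPolynomial.aeval (R := ℝ) c).range with
      star_mem' := by
        intro a ha
        have : star a = a := by ext x; simp
        rw [this]; exact ha }
  have key : P' = Q' := by
    refine ext_of_forall_mem_subalgebra_integral_eq_of_polish (𝕜 := ℝ) (A := A) ?_ ?_
    · intro x y hxy
      have : ∃ i, x.1 i ≠ y.1 i := by
        by_contra hcon
        push Not at hcon
        exact hxy (Subtype.ext (funext hcon))
      obtain ⟨i, hi⟩ := this
      refine ⟨c i, ⟨BoundedContinuousFunction.toContinuousMapStarₐ ℝ (c i), ?_, rfl⟩, hi⟩
      refine ⟨c i, ?_, rfl⟩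
      exact ⟨MvPolynomial.X i, by simp⟩
    · rintro g ⟨p, rfl⟩
      induction p using MvPolynomial.induction_on' with
      | monomial u r =>
        have hv : ∀ x : X, (MvPolynomial.aeval (R := ℝ) c (MvPolynomial.monomial u r)) x
            = r * ∏ i, x.1 i ^ u i := by
          intro x
          rw [MvPolynomial.aeval_monomial, Finsupp.prod_fintype _ _ (by simp)]
          rw [← Algebra.smul_def]
          simp [c]
        have e1 : ∀ m : Measure (Fin n → ℝ), m.restrict X = m →
            ∫ x : X, r * ∏ i, x.1 i ^ u i ∂(m.comap Subtype.val) =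
            r * ∫ x, ∏ i, x i ^ u i ∂m := by
          intro m hm
          rw [integral_subtype_comap hXm (fun x : Fin n → ℝ => r * ∏ i, x i ^ u i), hm,
            integral_const_mul]
        refine (integral_congr_ae (ae_of_all _ hv)).trans ?_
        refine Eq.trans ?_ (integral_congr_ae (ae_of_all _ hv)).symm
        rw [e1 P hPr, e1 Q hQr, h]
      | add p q hp hq =>
        have hi : ∀ (m : Measure X) [IsFiniteMeasure m] (g : BoundedContinuousFunction X ℝ),
          Integrable (fun x => g x) m := fun m _ g => g.integrable m
        simp only [RingHom.coe_coe, map_add, BoundedContinuousFunction.coe_add, Pi.add_apply,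
          AlgHom.toRingHom_eq_coe] at hp hq ⊢
        rw [integral_add (hi _ _) (hi _ _), integral_add (hi _ _) (hi _ _), hp, hq]
  rw [← hP', ← hQ', key]

theorem tangent_pow (j : ℕ) (y t : ℝ) (hy : 0 ≤ y) (ht : 0 ≤ t) :
    ((j : ℝ) + 1) * (t ^ j * y) ≤ y ^ (j + 1) + j * t ^ (j + 1) := by
  induction j with
  | zero => simp
  | succ j ih =>
    have h1 := mul_le_mul_of_nonneg_left ih hy
    have h2 : 0 ≤ ((j : ℝ) + 1) * (t ^ j * (y - t) ^ 2) := by positivity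
    push_cast
    have e1 : y ^ (j + 1 + 1) = y * y ^ (j + 1) := by ring
    have e2 : t ^ (j + 1 + 1) = t ^ j * t ^ 2 := by ring
    have e3 : t ^ (j + 1) = t ^ j * t := by ring
    rw [e1, e2, e3]
    rw [e3] at h1
    nlinarith

/-- If `ν` is a finite nonnegative Borel measure on `X × Y` whose moments
agree with those of `μ = δ_{f(x)}(dy) λ(dx)` for all indices `d ∈ D = {d : d_y ≤ 1}`,
then `Σ_{|d| ≤ s} μ_{2d} ≤ Σ_{|d| ≤ s} ν_{2d}` for every fixed `s`. -/
theorem trace_bound_for_matching_measures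
    (n : ℕ) (hn : 1 ≤ n)
    (X : Set (Fin n → ℝ)) (hXsub : X ⊆ Icc 0 1) (hXc : IsCompact X)
    (γ : ℝ) (hγ : 0 < γ)
    (lam : Measure (Fin n → ℝ)) [IsProbabilityMeasure lam] (hlam : lam Xᶜ = 0)
    (f : (Fin n → ℝ) → ℝ) (hf : Measurable f) (hfY : ∀ x ∈ X, f x ∈ Icc 0 γ)
    (s : ℕ)
    (ν : Measure ((Fin n → ℝ) × ℝ)) [IsFiniteMeasure ν]
    (hνsupp : ν ((X ×ˢ Icc (0:ℝ) γ)ᶜ) = 0)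
    (hνint : ∀ d : (Fin n → ℕ) × ℕ,
      Integrable (fun p : (Fin n → ℝ) × ℝ => (∏ i, p.1 i ^ d.1 i) * p.2 ^ d.2) ν)
    (hνmom : ∀ d : (Fin n → ℕ) × ℕ, d.2 ≤ 1 →
      ∫ p : (Fin n → ℝ) × ℝ, (∏ i, p.1 i ^ d.1 i) * p.2 ^ d.2 ∂ν
        = ∫ x, (∏ i, x i ^ d.1 i) * f x ^ d.2 ∂lam) :
    ∑ d ∈ idx n s, ∫ x, (∏ i, x i ^ (2 * d.1 i)) * f x ^ (2 * d.2) ∂lam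
      ≤ ∑ d ∈ idx n s,
          ∫ p : (Fin n → ℝ) × ℝ, (∏ i, p.1 i ^ (2 * d.1 i)) * p.2 ^ (2 * d.2) ∂ν := by
  have hXm : MeasurableSet X := hXc.isClosed.measurableSet
  have hlX : ∀ᵐ x ∂lam, x ∈ X := by rw [ae_iff]; exact hlam
  have hνX : ∀ᵐ p ∂ν, p ∈ X ×ˢ Icc (0:ℝ) γ := by rw [ae_iff]; exact hνsupp
  have hmon : ∀ a : Fin n → ℕ, Measurable (fun x : Fin n → ℝ => ∏ i, x i ^ a i) := by
    intro a; fun_prop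
  have hmon0 : ∀ a : Fin n → ℕ, ∀ x ∈ X, 0 ≤ ∏ i, x i ^ a i := fun a x hx =>
    Finset.prod_nonneg fun i _ => pow_nonneg ((hXsub hx).1 i) _
  have hmon1 : ∀ a : Fin n → ℕ, ∀ x ∈ X, ∏ i, x i ^ a i ≤ 1 := fun a x hx =>
    Finset.prod_le_one (fun i _ => pow_nonneg ((hXsub hx).1 i) _)
      fun i _ => pow_le_one₀ ((hXsub hx).1 i) ((hXsub hx).2 i)
  have hA : ν.map Prod.fst = lam := by
    refine mom_ext hXc _ _ ?_ hlam ?_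
    · rw [Measure.map_apply measurable_fst hXm.compl]
      refine measure_mono_null ?_ hνsupp
      intro p hp hp'
      exact hp hp'.1
    · intro a
      rw [integral_map measurable_fst.aemeasurable (hmon a).aestronglyMeasurable]
      simpa using hνmom (a, 0) (by simp)
  have hfint : Integrable f lam := by
    refine Integrable.of_bound hf.aestronglyMeasurable γ ?_
    filter_upwards [hlX] with x hx
    rw [Real.norm_eq_abs, abs_of_nonneg (hfY x hx).1]; exact (hfY x hx).2
  have hyint : Integrable (fun p : (Fin n → ℝ) × ℝ => p.2) ν := by
    simpa using hνint (0, 1)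
  have hden1 : ∀ g : (Fin n → ℝ) → ℝ,
      ∫ x, g x ∂(lam.withDensity fun x => ENNReal.ofReal (f x)) = ∫ x, g x * f x ∂lam := by
    intro g
    rw [integral_withDensity_eq_integral_toReal_smul (by fun_prop) (by simp)]
    refine integral_congr_ae ?_
    filter_upwards [hlX] with x hx
    rw [ENNReal.toReal_ofReal (hfY x hx).1, smul_eq_mul, mul_comm]
  have : IsFiniteMeasure (ν.withDensity fun p => ENNReal.ofReal p.2) :=
    isFiniteMeasure_withDensity_ofReal hyint.2
  have : IsFiniteMeasure (lam.withDensity fun x => ENNReal.ofReal (f x)) :=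
    isFiniteMeasure_withDensity_ofReal hfint.2
  have hden2 : ∀ g : (Fin n → ℝ) → ℝ, Measurable g →
      ∫ x, g x ∂((ν.withDensity fun p => ENNReal.ofReal p.2).map Prod.fst)
        = ∫ p, g p.1 * p.2 ∂ν := by
    intro g hg
    rw [integral_map measurable_fst.aemeasurable hg.aestronglyMeasurable,
      integral_withDensity_eq_integral_toReal_smul (by fun_prop) (by simp)]
    refine integral_congr_ae ?_
    filter_upwards [hνX] with p hp
    rw [ENNReal.toReal_ofReal hp.2.1, smul_eq_mul, mul_comm]
  have hB : (ν.withDensity fun p => ENNReal.ofReal p.2).map Prod.fst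
      = lam.withDensity fun x => ENNReal.ofReal (f x) := by
    refine mom_ext hXc _ _ ?_ ?_ ?_
    · rw [Measure.map_apply measurable_fst hXm.compl]
      refine withDensity_absolutelyContinuous _ _ (measure_mono_null ?_ hνsupp)
      intro p hp hp'
      exact hp hp'.1
    · exact withDensity_absolutelyContinuous _ _ hlam
    · intro a
      rw [hden1, hden2 _ (hmon a)]
      simpa using hνmom (a, 1) (by simp)
  refine Finset.sum_le_sum fun d _ => ?_
  obtain ⟨a, k⟩ := d
  rcases k with _ | k
  · simpa using (hνmom (fun i => 2 * a i, 0) (by simp)).ge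
  obtain ⟨j, hj⟩ : ∃ j, 2 * (k + 1) = j + 1 := ⟨2 * k + 1, by ring⟩
  simp only [hj]
  set M : (Fin n → ℝ) → ℝ := fun x => ∏ i, x i ^ (2 * a i) with hM
  have hMm : Measurable M := hmon _
  have hM0 : ∀ x ∈ X, 0 ≤ M x := hmon0 _
  have hM1 : ∀ x ∈ X, M x ≤ 1 := hmon1 _
  have hgb : ∀ r : ℕ, ∀ x ∈ X, 0 ≤ M x * f x ^ r ∧ M x * f x ^ r ≤ γ ^ r := by
    intro r x hx
    have h0 := (hfY x hx).1
    have h1 : f x ^ r ≤ γ ^ r := pow_le_pow_left₀ h0 (hfY x hx).2 r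
    have h2 : 0 ≤ f x ^ r := pow_nonneg h0 r
    exact ⟨mul_nonneg (hM0 x hx) h2, (mul_le_of_le_one_left h2 (hM1 x hx)).trans h1⟩
  have i1 : Integrable (fun p : (Fin n → ℝ) × ℝ => M p.1 * p.2 ^ (j + 1)) ν :=
    hνint (fun i => 2 * a i, j + 1)
  have i2 : Integrable (fun p : (Fin n → ℝ) × ℝ => M p.1 * f p.1 ^ (j + 1)) ν := by
    refine Integrable.of_bound (by
      apply Measurable.aestronglyMeasurable; fun_prop) (γ ^ (j + 1)) ?_
    filter_upwards [hνX] with p hp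
    rw [Real.norm_eq_abs, abs_of_nonneg (hgb _ _ hp.1).1]; exact (hgb _ _ hp.1).2
  have i3 : Integrable (fun p : (Fin n → ℝ) × ℝ => M p.1 * f p.1 ^ j * p.2) ν := by
    refine Integrable.of_bound (by
      apply Measurable.aestronglyMeasurable; fun_prop) (γ ^ j * γ) ?_
    filter_upwards [hνX] with p hp
    have h := hgb j _ hp.1
    rw [Real.norm_eq_abs, abs_of_nonneg (mul_nonneg h.1 hp.2.1)]
    exact mul_le_mul h.2 hp.2.2 hp.2.1 (by positivity)
  have e2 : ∫ p, M p.1 * f p.1 ^ (j + 1) ∂ν = ∫ x, M x * f x ^ (j + 1) ∂lam := by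
    have h := integral_map (μ := ν) (φ := Prod.fst) measurable_fst.aemeasurable
      (f := fun x => M x * f x ^ (j + 1))
      (by apply Measurable.aestronglyMeasurable; fun_prop)
    rw [hA] at h
    exact h.symm
  have e3 : ∫ p, M p.1 * f p.1 ^ j * p.2 ∂ν = ∫ x, M x * f x ^ (j + 1) ∂lam := by
    rw [← hden2 (fun x => M x * f x ^ j) (by fun_prop), hB, hden1]
    simp only [pow_succ, mul_assoc]
  have hle : ∫ p, ((j : ℝ) + 1) * (M p.1 * f p.1 ^ j * p.2) ∂ν
      ≤ ∫ p, (M p.1 * p.2 ^ (j + 1) + j * (M p.1 * f p.1 ^ (j + 1))) ∂ν := by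
    refine integral_mono_ae (i3.const_mul _) (i1.add (i2.const_mul _)) ?_
    filter_upwards [hνX] with p hp
    have h := mul_le_mul_of_nonneg_left
      (tangent_pow j p.2 (f p.1) hp.2.1 (hfY _ hp.1).1) (hM0 _ hp.1)
    linarith
  rw [integral_const_mul, integral_add i1 (i2.const_mul _), integral_const_mul, e2, e3] at hle
  change ∫ x, M x * f x ^ (j + 1) ∂lam ≤ ∫ p, M p.1 * p.2 ^ (j + 1) ∂ν
  linarith
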